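/- arXiv:2001.05785 — 5 statements merged into one kernel-verified Lean document; each statement's English description precedes it below -/
import Mathlib

section
/- Let S be a Polish metric space and let P be an asymptotically stable Markov-Feller operator on S. Then the set of points z ∈ S at which P does not have the e-property in C_b(S) is a meagre subset of S, and the set of points at which P has the e-property in C_b(S) is dense in S. -/
open MeasureTheory ProbabilityTheory Filter Topology

/-- The `n`-step evolution of a measure under the Markov operator generated by the
transition kernel `κ`: `P⁰μ = μ`, `Pⁿ⁺¹μ = (Pⁿμ).bind κ`. -/
noncomputable def kIter {S : Type*} [MeasurableSpace S] (κ : ProbabilityTheory.Kernel S S) :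
    ℕ → Measure S → Measure S
  | 0, μ => μ
  | n + 1, μ => (kIter κ n μ).bind (fun x => κ x)

/-- The `n`-th iterate of the dual operator: `Uⁿf(x) = ∫ f d(Pⁿδₓ)`. -/
noncomputable def kDual {S : Type*} [MeasurableSpace S] (κ : ProbabilityTheory.Kernel S S)
    (n : ℕ) (f : S → ℝ) (x : S) : ℝ :=
  ∫ y, f y ∂(kIter κ n (Measure.dirac x))

/-- A real-valued function is bounded. -/
def IsBddFun {S : Type*} (f : S → ℝ) : Prop := ∃ C : ℝ, ∀ x, |f x| ≤ C

/-- The Feller property: the dual operator maps bounded continuous functions to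
continuous functions. -/
def IsFeller {S : Type*} [MeasurableSpace S] [TopologicalSpace S]
    (κ : ProbabilityTheory.Kernel S S) : Prop :=
  ∀ f : S → ℝ, Continuous f → IsBddFun f → Continuous (fun x => ∫ y, f y ∂(κ x))

/-- Asymptotic stability: `μst` is an invariant probability measure and `Pⁿμ → μst`
weakly for every Borel probability measure `μ`. -/
def IsAsympStable {S : Type*} [MeasurableSpace S] [TopologicalSpace S]
    (κ : ProbabilityTheory.Kernel S S) (μst : Measure S) : Prop :=
  IsProbabilityMeasure μst ∧ kIter κ 1 μst = μst ∧
    ∀ μ : Measure S, IsProbabilityMeasure μ → ∀ f : S → ℝ, Continuous f → IsBddFun f →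
      Tendsto (fun n => ∫ x, f x ∂(kIter κ n μ)) atTop (𝓝 (∫ x, f x ∂μst))

/-- The e-property in `C_b(S)` at a point `z`: for every bounded continuous `f`,
`sup_{n} |Uⁿf(x) − Uⁿf(z)| → 0` as `x → z`. -/
def EPropCbAt {S : Type*} [MeasurableSpace S] [TopologicalSpace S]
    (κ : ProbabilityTheory.Kernel S S) (z : S) : Prop :=
  ∀ f : S → ℝ, Continuous f → IsBddFun f →
    Tendsto (fun x => ⨆ n : ℕ, |kDual κ n f x - kDual κ n f z|) (𝓝 z) (𝓝 0)

/-- If continuous maps `F n` from a Baire space converge pointwise to a constant `y`, then at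
residually many points `z` the convergence is locally uniform: `F n x → y` as `n → ∞`, `x → z`. -/
theorem eventually_residual_tendsto_prod_of_tendsto_const {X Y : Type*} [TopologicalSpace X]
    [BaireSpace X] [TopologicalSpace Y] [TopologicalSpace.PseudoMetrizableSpace Y]
    {F : ℕ → X → Y} {y : Y} (hF : ∀ n, Continuous (F n))
    (hlim : ∀ x, Tendsto (fun n => F n x) atTop (𝓝 y)) :
    ∀ᶠ z in residual X, Tendsto (fun p : ℕ × X => F p.1 p.2) (atTop ×ˢ 𝓝 z) (𝓝 y) := by
  let := TopologicalSpace.pseudoMetrizableSpacePseudoMetric Y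
  obtain ⟨u, -, hu_pos, hu_lim⟩ := exists_seq_strictAnti_tendsto (0 : ℝ)
  let G : ℕ → ℕ → Set X := fun m N => ⋂ n ≥ N, {x | dist (F n x) y ≤ u m}
  have hclosed : ∀ m N, IsClosed (G m N) := fun m N =>
    isClosed_biInter fun n _ => isClosed_le ((hF n).dist continuous_const) continuous_const
  have hcover : ∀ m, ⋃ N, G m N = Set.univ := fun m => by
    refine Set.eq_univ_of_forall fun x => ?_
    obtain ⟨N, hN⟩ := Metric.tendsto_atTop.1 (hlim x) (u m) (hu_pos m)
    exact Set.mem_iUnion.2 ⟨N, Set.mem_iInter₂.2 fun n hn => (hN n hn).le⟩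
  have hres : ∀ m, ⋃ N, interior (G m N) ∈ residual X := fun m =>
    residual_of_dense_open (isOpen_iUnion fun _ => isOpen_interior)
      (dense_iUnion_interior_of_closed (hclosed m) (hcover m))
  filter_upwards [eventually_countable_forall.2 hres] with z hz
  refine Metric.tendsto_nhds.2 fun ε hε => ?_
  obtain ⟨m, hm⟩ := (hu_lim.eventually_lt_const hε).exists
  obtain ⟨N, hN⟩ := Set.mem_iUnion.1 (hz m)
  filter_upwards [prod_mem_prod (Ici_mem_atTop N) (mem_interior_iff_mem_nhds.1 hN)]
    with p hp
  exact (Set.mem_iInter₂.1 hp.2 p.1 hp.1).trans_lt hm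

/-- A sequence of continuous functions that converges to a constant locally uniformly near `z`
is equicontinuous at `z`. -/
theorem tendsto_iSup_abs_sub_of_tendsto_prod {X : Type*} [TopologicalSpace X] {g : ℕ → X → ℝ}
    {z : X} {c : ℝ} (hg : ∀ n, ContinuousAt (g n) z)
    (hlim : Tendsto (fun p : ℕ × X => g p.1 p.2) (atTop ×ˢ 𝓝 z) (𝓝 c)) :
    Tendsto (fun x => ⨆ n, |g n x - g n z|) (𝓝 z) (𝓝 0) := by
  refine Metric.tendsto_nhds.2 fun ε hε => ?_
  have hclose := Metric.tendsto_nhds.1 hlim (ε / 4) (by positivity)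
  obtain ⟨p, hp, q, hq, hpq⟩ := eventually_prod_iff.1 hclose
  obtain ⟨N, hN⟩ := eventually_atTop.1 hp
  have hsmall : ∀ᶠ x in 𝓝 z, ∀ n ∈ Set.Iio N, dist (g n x) (g n z) < ε / 2 :=
    (eventually_all_finite (Set.finite_Iio N)).2 fun n _ =>
      Metric.tendsto_nhds.1 (hg n) (ε / 2) (by positivity)
  filter_upwards [hsmall, hq] with x hx hqx
  have hle : ⨆ n, |g n x - g n z| ≤ ε / 2 := ciSup_le fun n => by
    rw [← Real.dist_eq]
    rcases lt_or_ge n N with hn | hn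
    · exact (hx n hn).le
    · have h₁ : dist (g n x) c < ε / 4 := hpq (hN n hn) hqx
      have h₂ : dist (g n z) c < ε / 4 := hpq (hN n hn) hq.self_of_nhds
      linarith [dist_triangle_right (g n x) (g n z) c]
  rw [Real.dist_eq, sub_zero, abs_of_nonneg (Real.iSup_nonneg fun n => abs_nonneg _)]
  linarith

instance isProbabilityMeasure_kIter {S : Type*} [MeasurableSpace S] (κ : Kernel S S)
    [IsMarkovKernel κ] (n : ℕ) (μ : Measure S) [IsProbabilityMeasure μ] :
    IsProbabilityMeasure (kIter κ n μ) := by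
  induction n with
  | zero => assumption
  | succ n ih => exact inferInstanceAs (IsProbabilityMeasure (κ ∘ₘ kIter κ n μ))

/-- The iterates of the dual of a Feller operator preserve continuity of bounded functions. -/
theorem IsFeller.continuous_kDual {S : Type*} [TopologicalSpace S] [MeasurableSpace S]
    [OpensMeasurableSpace S] {κ : Kernel S S} [IsMarkovKernel κ] (hκ : IsFeller κ)
    (n : ℕ) {f : S → ℝ} (hf : Continuous f) (hb : IsBddFun f) : Continuous (kDual κ n f) := by
  induction n generalizing f with
  | zero =>
    have : kDual κ 0 f = f := funext fun x =>
      integral_dirac' f x hf.measurable.stronglyMeasurable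
    rwa [this]
  | succ n ih =>
    obtain ⟨C, hC⟩ := hb
    have hstep : kDual κ (n + 1) f = kDual κ n (fun x => ∫ y, f y ∂(κ x)) := funext fun x =>
      Kernel.integral_comp (η := κ) (κ := Kernel.const S (kIter κ n (Measure.dirac x))) (a := x)
        (Integrable.of_bound hf.measurable.aestronglyMeasurable C (ae_of_all _ hC))
    rw [hstep]
    refine ih (hκ f hf ⟨C, hC⟩) ⟨C, fun x => ?_⟩
    simpa using norm_integral_le_of_norm_le_const (μ := κ x) (f := f) (ae_of_all _ hC)

/-- For an asymptotically stable Markov–Feller operator on a Polish metric space, the set of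
points at which the e-property in `C_b(S)` fails is meagre, and the set of points at which it
holds is dense. -/
theorem meagre_of_not_eProp_of_asympStable
    {S : Type*} [MetricSpace S] [CompleteSpace S] [SecondCountableTopology S]
    [MeasurableSpace S] [BorelSpace S]
    (κ : ProbabilityTheory.Kernel S S) [IsMarkovKernel κ]
    (hFeller : IsFeller κ) (μst : Measure S) (hstab : IsAsympStable κ μst) :
    IsMeagre {z : S | ¬ EPropCbAt κ z} ∧ Dense {z : S | EPropCbAt κ z} := by
  obtain ⟨hprob, -, hconv⟩ := hstab
  let F : ℕ → S → ProbabilityMeasure S := fun n x => ⟨kIter κ n (Measure.dirac x), inferInstance⟩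
  have hbdd : ∀ f : BoundedContinuousFunction S ℝ, IsBddFun f := fun f => ⟨‖f‖, f.norm_coe_le_norm⟩
  have hF : ∀ n, Continuous (F n) := fun n =>
    continuous_iff_continuousAt.2 fun x =>
      ProbabilityMeasure.tendsto_iff_forall_integral_tendsto.2 fun f =>
        (hFeller.continuous_kDual n f.continuous (hbdd f)).continuousAt
  have hlim : ∀ x, Tendsto (fun n => F n x) atTop (𝓝 ⟨μst, hprob⟩) := fun x =>
    ProbabilityMeasure.tendsto_iff_forall_integral_tendsto.2 fun f =>
      hconv _ inferInstance f f.continuous (hbdd f)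
  have hres : {z : S | EPropCbAt κ z} ∈ residual S := by
    filter_upwards [eventually_residual_tendsto_prod_of_tendsto_const hF hlim] with z hz f hf hb
    obtain ⟨C, hC⟩ := hb
    exact tendsto_iSup_abs_sub_of_tendsto_prod
      (fun n => (hFeller.continuous_kDual n hf ⟨C, hC⟩).continuousAt)
      (ProbabilityMeasure.tendsto_iff_forall_integral_tendsto.1 hz
        (BoundedContinuousFunction.ofNormedAddCommGroup f hf C hC))
  refine ⟨?_, dense_of_mem_residual hres⟩
  rwa [IsMeagre, ← Set.compl_ofPred, compl_compl]
end

section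
/- Let S be a Polish metric space and let P be an asymptotically stable Markov-Feller operator on S with invariant probability measure μ*. If the interior of the support of μ* is non-empty, then P has the e-property in C_b(S) at every point of S. -/
open MeasureTheory ProbabilityTheory Filter Topology

open scoped BoundedContinuousFunction

/-- A continuous bounded function as a `BoundedContinuousFunction`. -/
noncomputable def IsBddFun.toBCF {S : Type*} [TopologicalSpace S] {f : S → ℝ}
    (hb : IsBddFun f) (hf : Continuous f) : S →ᵇ ℝ :=
  BoundedContinuousFunction.ofNormedAddCommGroup f hf hb.choose
    (fun x => by simpa [Real.norm_eq_abs] using hb.choose_spec x)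

theorem BoundedContinuousFunction.isBddFun {S : Type*} [TopologicalSpace S] (f : S →ᵇ ℝ) :
    IsBddFun f :=
  ⟨‖f‖, fun x => by simpa [Real.norm_eq_abs] using f.norm_coe_le_norm x⟩

section MarkovOperator

variable {S : Type*} [TopologicalSpace S] {U : (S →ᵇ ℝ) →ₗ[ℝ] (S →ᵇ ℝ)}

theorem monotone_pow_apply (hU : Monotone U) (n : ℕ) : Monotone (U ^ n) := by
  rw [Module.End.coe_pow]
  exact hU.iterate n

theorem pow_apply_one (hU₁ : U 1 = 1) (n : ℕ) : (U ^ n) 1 = 1 := by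
  rw [Module.End.coe_pow]
  exact Function.iterate_fixed hU₁ n

/-- If `|f| ≤ a + C h` pointwise, then `|Uⁿ f| ≤ a + C Uⁿ h` for a Markov operator `U`. -/
theorem abs_pow_apply_le (hU : Monotone U) (hU₁ : U 1 = 1) {f h : S →ᵇ ℝ} {a C : ℝ}
    (hfh : ∀ x, |f x| ≤ a + C * h x) (n : ℕ) (x : S) :
    |(U ^ n) f x| ≤ a + C * (U ^ n) h x := by
  have hmap : (U ^ n) (a • (1 : S →ᵇ ℝ) + C • h) = a • 1 + C • (U ^ n) h := by
    rw [map_add, map_smul, map_smul, pow_apply_one hU₁]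
  have hle : f ≤ a • (1 : S →ᵇ ℝ) + C • h := fun y => by
    simpa using (abs_le.1 (hfh y)).2
  have hge : -f ≤ a • (1 : S →ᵇ ℝ) + C • h := fun y => by
    simpa using (neg_le_abs _).trans (hfh y)
  have h₁ := monotone_pow_apply hU n hle x
  have h₂ := monotone_pow_apply hU n hge x
  rw [hmap] at h₁ h₂
  rw [map_neg] at h₂
  refine abs_le'.2 ⟨by simpa using h₁, by simpa using h₂⟩

/-- `h` dominates the eventual size of `Uⁿ g` up to an error `ε`. -/
structure EventuallyDominates (U : (S →ᵇ ℝ) →ₗ[ℝ] (S →ᵇ ℝ)) (g : S →ᵇ ℝ) (ε C : ℝ)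
    (h : S →ᵇ ℝ) : Prop where
  nonneg : ∀ x, 0 ≤ h x
  le_one : ∀ x, h x ≤ 1
  bound : ∀ᶠ n in atTop, ∀ x, |(U ^ n) g x| ≤ ε + C * h x

theorem eventuallyDominates_one (hU : Monotone U) (hU₁ : U 1 = 1) (g : S →ᵇ ℝ) {ε : ℝ}
    (hε : 0 ≤ ε) : EventuallyDominates U g ε ‖g‖ 1 where
  nonneg _ := zero_le_one
  le_one _ := le_rfl
  bound := Eventually.of_forall fun n x => by
    have hg : ∀ y, |g y| ≤ ε + ‖g‖ * (1 : S →ᵇ ℝ) y := fun y => by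
      have := g.norm_coe_le_norm y
      rw [Real.norm_eq_abs] at this
      simp only [BoundedContinuousFunction.coe_one, Pi.one_apply, mul_one]
      linarith
    simpa [pow_apply_one hU₁] using abs_pow_apply_le hU hU₁ hg n x

/-- Where `φ` is nonzero the iterates of `g` are eventually small, so the dominating function may
be cut off by `1 - φ` and transported by `Uᵐ`. -/
theorem EventuallyDominates.cutoff (hU : Monotone U) (hU₁ : U 1 = 1) {g h φ : S →ᵇ ℝ} {ε C : ℝ}
    (hC : 0 ≤ C) (hφ₀ : ∀ x, 0 ≤ φ x) (hφ₁ : ∀ x, φ x ≤ 1)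
    (hφ : ∀ᶠ n in atTop, ∀ x, φ x ≠ 0 → |(U ^ n) g x| ≤ ε)
    (hh : EventuallyDominates U g ε C h) (m : ℕ) :
    EventuallyDominates U g ε C ((U ^ m) ((1 - φ) * h)) where
  nonneg x := by
    have h0 : (0 : S →ᵇ ℝ) ≤ (1 - φ) * h := fun y => by
      simpa using mul_nonneg (sub_nonneg.2 (hφ₁ y)) (hh.nonneg y)
    simpa using monotone_pow_apply hU m h0 x
  le_one x := by
    have h1 : (1 - φ) * h ≤ 1 := fun y => by
      have := mul_le_one₀ (sub_le_self 1 (hφ₀ y)) (hh.nonneg y) (hh.le_one y)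
      simpa using this
    simpa [pow_apply_one hU₁] using monotone_pow_apply hU m h1 x
  bound := by
    obtain ⟨N, hN⟩ := eventually_atTop.1 (hφ.and hh.bound)
    filter_upwards [eventually_ge_atTop (m + N)] with n hn x
    obtain ⟨k, rfl⟩ := Nat.exists_eq_add_of_le ((Nat.le_add_right m N).trans hn)
    obtain ⟨hsmall, hdom⟩ := hN k (by omega)
    rw [pow_add, Module.End.mul_apply]
    refine abs_pow_apply_le hU hU₁ (fun y => ?_) m x
    simp only [BoundedContinuousFunction.mul_apply, BoundedContinuousFunction.sub_apply,
      BoundedContinuousFunction.coe_one, Pi.one_apply]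
    by_cases hy : φ y = 0
    · simpa [hy] using hdom y
    · have := mul_nonneg hC (mul_nonneg (sub_nonneg.2 (hφ₁ y)) (hh.nonneg y))
      linarith [hsmall y hy]

variable [MeasurableSpace S] [OpensMeasurableSpace S] {μ : Measure S}
  [IsProbabilityMeasure μ]

/-- There are dominating functions with arbitrarily small value at a given point. -/
theorem exists_eventuallyDominates_lt (hU : Monotone U) (hU₁ : U 1 = 1)
    (hlim : ∀ (f : S →ᵇ ℝ) (x : S), Tendsto (fun n => (U ^ n) f x) atTop (𝓝 (∫ y, f y ∂μ)))
    {g φ : S →ᵇ ℝ} {ε : ℝ} (hε : 0 ≤ ε) (hφ₀ : ∀ x, 0 ≤ φ x) (hφ₁ : ∀ x, φ x ≤ 1)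
    (hφ : ∀ᶠ n in atTop, ∀ x, φ x ≠ 0 → |(U ^ n) g x| ≤ ε)
    (hφμ : 0 < ∫ x, φ x ∂μ) (w : S) {δ : ℝ} (hδ : 0 < δ) :
    ∃ h, EventuallyDominates U g ε ‖g‖ h ∧ h w < δ := by
  set q : ℝ := ∫ x, (1 - φ) x ∂μ with hq
  have hq₀ : 0 ≤ q := integral_nonneg fun x => by simpa using hφ₁ x
  have hq₁ : q < 1 := by
    have : q = 1 - ∫ x, φ x ∂μ := by
      simp only [hq, BoundedContinuousFunction.sub_apply, BoundedContinuousFunction.coe_one,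
        Pi.one_apply]
      rw [integral_sub (integrable_const _) (φ.integrable μ)]
      simp
    linarith
  obtain ⟨r, hqr, hr₁⟩ := exists_between hq₁
  have hr₀ : 0 < r := hq₀.trans_lt hqr
  have key : ∀ k : ℕ, ∃ h, EventuallyDominates U g ε ‖g‖ h ∧
      ∫ x, ((1 - φ) * h) x ∂μ < 2 * r ^ k := by
    intro k
    induction k with
    | zero =>
      refine ⟨1, eventuallyDominates_one hU hU₁ g hε, ?_⟩
      rw [mul_one, ← hq]
      linarith
    | succ k ih =>
      obtain ⟨h, hh, hlt⟩ := ih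
      have hstep := fun m => hh.cutoff hU hU₁ (norm_nonneg g) hφ₀ hφ₁ hφ m
      have htend : Tendsto (fun m => ∫ x, ((1 - φ) * (U ^ m) ((1 - φ) * h)) x ∂μ) atTop
          (𝓝 (∫ x, (1 - φ) x * ∫ y, ((1 - φ) * h) y ∂μ ∂μ)) := by
        refine tendsto_integral_of_dominated_convergence (fun _ => 1)
          (fun m => BoundedContinuousFunction.integrable μ _ |>.aestronglyMeasurable)
          (integrable_const _) (fun m => ae_of_all _ fun x => ?_) (ae_of_all _ fun x => ?_)
        · have h₁ := (hstep m).nonneg x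
          have h₂ := (hstep m).le_one x
          have h₃ : 0 ≤ (1 - φ) x := by simpa using hφ₁ x
          have h₄ : (1 - φ) x ≤ 1 := by simpa using hφ₀ x
          rw [BoundedContinuousFunction.mul_apply, Real.norm_eq_abs,
            abs_of_nonneg (mul_nonneg h₃ h₁)]
          exact mul_le_one₀ h₄ h₁ h₂
        · exact (hlim _ x).const_mul _
      rw [integral_mul_const, ← hq] at htend
      have hlt' : q * ∫ y, ((1 - φ) * h) y ∂μ < 2 * r ^ (k + 1) :=
        calc q * ∫ y, ((1 - φ) * h) y ∂μ ≤ q * (2 * r ^ k) :=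
              mul_le_mul_of_nonneg_left hlt.le hq₀
          _ < r * (2 * r ^ k) := mul_lt_mul_of_pos_right hqr (by positivity)
          _ = 2 * r ^ (k + 1) := by ring
      obtain ⟨m, hm⟩ := (htend.eventually_lt_const hlt').exists
      exact ⟨_, hstep m, hm⟩
  obtain ⟨k, hk⟩ := exists_pow_lt_of_lt_one (half_pos hδ) hr₁
  obtain ⟨h, hh, hlt⟩ := key k
  obtain ⟨m, hm⟩ := ((hlim ((1 - φ) * h) w).eventually_lt_const
    (show _ < δ by linarith)).exists
  exact ⟨_, hh.cutoff hU hU₁ (norm_nonneg g) hφ₀ hφ₁ hφ m, hm⟩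

end MarkovOperator

/-- On any nonempty open set, pointwise convergence to `0` of continuous functions is, by Baire
category, eventually `ε`-uniform on some ball. -/
theorem exists_ball_eventually_abs_le {S : Type*} [PseudoMetricSpace S] [BaireSpace S]
    {F : ℕ → S → ℝ} (hF : ∀ n, Continuous (F n))
    (hlim : ∀ x, Tendsto (fun n => F n x) atTop (𝓝 0)) {V : Set S} (hV : IsOpen V)
    (hVne : V.Nonempty) {ε : ℝ} (hε : 0 < ε) :
    ∃ x ∈ V, ∃ r > 0, ∀ᶠ n in atTop, ∀ y ∈ Metric.ball x r, |F n y| ≤ ε := by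
  have hclosed : ∀ N : ℕ, IsClosed {x | ∀ n ≥ N, |F n x| ≤ ε} := fun N => by
    simp only [Set.ofPred_forall]
    exact isClosed_iInter fun n => isClosed_iInter fun _ =>
      isClosed_le (hF n).abs continuous_const
  have hcover : ⋃ N : ℕ, {x | ∀ n ≥ N, |F n x| ≤ ε} = Set.univ := by
    refine Set.eq_univ_of_forall fun x => Set.mem_iUnion.2 ?_
    have : ∀ᶠ n in atTop, |F n x| < ε := by
      have h := (hlim x).abs
      rw [abs_zero] at h
      exact h.eventually_lt_const hε
    obtain ⟨N, hN⟩ := eventually_atTop.1 this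
    exact ⟨N, fun n hn => (hN n hn).le⟩
  obtain ⟨x, hxV, hx⟩ :=
    (dense_iUnion_interior_of_closed hclosed hcover).inter_open_nonempty V hV hVne
  obtain ⟨N, hN⟩ := Set.mem_iUnion.1 hx
  obtain ⟨r, hr, hball⟩ := Metric.isOpen_iff.1 isOpen_interior x hN
  refine ⟨x, hxV, r, hr, ?_⟩
  filter_upwards [eventually_ge_atTop N] with n hn y hy
  exact interior_subset (hball hy) n hn

/-- A bump function at a point all of whose neighbourhoods are charged by `μ`. -/
theorem exists_bump_integral_pos {S : Type*} [PseudoMetricSpace S] [MeasurableSpace S]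
    [OpensMeasurableSpace S] (μ : Measure S) [IsFiniteMeasure μ] {x : S} {r : ℝ} (hr : 0 < r)
    (hx : 0 < μ (Metric.ball x r)) :
    ∃ φ : S →ᵇ ℝ, (∀ y, 0 ≤ φ y) ∧ (∀ y, φ y ≤ 1) ∧ (∀ y, φ y ≠ 0 → y ∈ Metric.ball x r) ∧
      0 < ∫ y, φ y ∂μ := by
  have hcont : Continuous fun y => max 0 (1 - dist y x / r) := by fun_prop
  have h₀ : ∀ y, 0 ≤ max 0 (1 - dist y x / r) := fun y => le_max_left _ _
  have h₁ : ∀ y, max 0 (1 - dist y x / r) ≤ 1 := fun y =>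
    max_le zero_le_one (sub_le_self _ (by positivity))
  have hb : IsBddFun fun y => max 0 (1 - dist y x / r) :=
    ⟨1, fun y => by rw [abs_of_nonneg (h₀ y)]; exact h₁ y⟩
  have hsupp : ∀ y, max 0 (1 - dist y x / r) ≠ 0 ↔ y ∈ Metric.ball x r := fun y => by
    rw [← (h₀ y).lt_iff_ne', lt_max_iff, sub_pos, div_lt_one hr, Metric.mem_ball]
    simp
  refine ⟨hb.toBCF hcont, h₀, h₁, fun y => (hsupp y).1, ?_⟩
  refine (integral_pos_iff_support_of_nonneg h₀
    (BoundedContinuousFunction.integrable μ (hb.toBCF hcont))).2 ?_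
  exact hx.trans_le (measure_mono fun y hy => (hsupp y).2 hy)

theorem isProbabilityMeasure_kIter_s2 {S : Type*} [MeasurableSpace S]
    {κ : ProbabilityTheory.Kernel S S} [IsMarkovKernel κ] (n : ℕ) (μ : Measure S) [IsProbabilityMeasure μ] :
    IsProbabilityMeasure (kIter κ n μ) := by
  induction n with
  | zero => assumption
  | succ n ih =>
    change IsProbabilityMeasure ((kIter κ n μ).bind κ)
    infer_instance

section Kernel

variable {S : Type*} [TopologicalSpace S] [MeasurableSpace S] [BorelSpace S]
  {κ : ProbabilityTheory.Kernel S S} [IsMarkovKernel κ]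

/-- The dual operator of a Feller kernel, acting on bounded continuous functions. -/
noncomputable def IsFeller.dual (hF : IsFeller κ) : (S →ᵇ ℝ) →ₗ[ℝ] (S →ᵇ ℝ) where
  toFun f := BoundedContinuousFunction.ofNormedAddCommGroup (fun x => ∫ y, f y ∂(κ x))
    (hF f f.continuous f.isBddFun) ‖f‖ fun x => by
      simpa using norm_integral_le_of_norm_le_const (μ := κ x)
        (ae_of_all _ f.norm_coe_le_norm)
  map_add' f g := by
    ext x
    exact integral_add (f.integrable (κ x)) (g.integrable (κ x))
  map_smul' c f := by
    ext x
    exact integral_const_mul c f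

theorem IsFeller.dual_apply (hF : IsFeller κ) (f : S →ᵇ ℝ) (x : S) :
    hF.dual f x = ∫ y, f y ∂(κ x) := rfl

theorem IsFeller.monotone_dual (hF : IsFeller κ) : Monotone hF.dual := fun f g hfg x =>
  integral_mono (f.integrable (κ x)) (g.integrable (κ x)) hfg

theorem IsFeller.dual_one (hF : IsFeller κ) : hF.dual 1 = 1 := by
  ext x
  simp [IsFeller.dual_apply]

theorem IsFeller.integral_kIter (hF : IsFeller κ) (n : ℕ) (μ : Measure S)
    [IsProbabilityMeasure μ] (f : S →ᵇ ℝ) :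
    ∫ x, f x ∂(kIter κ n μ) = ∫ x, (hF.dual ^ n) f x ∂μ := by
  induction n generalizing f with
  | zero => rfl
  | succ n ih =>
    have := isProbabilityMeasure_kIter_s2 (κ := κ) n μ
    rw [pow_succ, Module.End.mul_apply, ← ih]
    exact Kernel.integral_comp (η := κ) (κ := Kernel.const Unit (kIter κ n μ)) (a := ())
      (f.integrable _)

theorem IsFeller.kDual_eq (hF : IsFeller κ) (n : ℕ) (f : S →ᵇ ℝ) (x : S) :
    kDual κ n f x = (hF.dual ^ n) f x := by
  rw [kDual, hF.integral_kIter, integral_dirac' _ _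
    ((hF.dual ^ n) f).continuous.stronglyMeasurable]

end Kernel

/-- If the support of the invariant measure of an asymptotically stable Markov–Feller
operator on a Polish metric space has non-empty interior, then the operator has the
e-property in `C_b(S)` at every point of `S`. -/
theorem eProp_everywhere_of_interior_support_nonempty
    {S : Type*} [MetricSpace S] [CompleteSpace S] [SecondCountableTopology S]
    [MeasurableSpace S] [BorelSpace S]
    (κ : ProbabilityTheory.Kernel S S) [IsMarkovKernel κ]
    (hFeller : IsFeller κ) (μst : Measure S) (hstab : IsAsympStable κ μst)
    (hsupp : (interior {x : S | ∀ ε > 0, 0 < μst (Metric.ball x ε)}).Nonempty) :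
    ∀ w : S, EPropCbAt κ w := by
  intro w f hf hb
  obtain ⟨hprob, -, hconv⟩ := hstab
  set U := hFeller.dual with hUdef
  have hU : Monotone U := hFeller.monotone_dual
  have hU₁ : U 1 = 1 := hFeller.dual_one
  have hlim : ∀ (f : S →ᵇ ℝ) (x : S),
      Tendsto (fun n => (U ^ n) f x) atTop (𝓝 (∫ y, f y ∂μst)) := fun f x => by
    simp only [hUdef, ← hFeller.kDual_eq]
    exact hconv (Measure.dirac x) inferInstance f f.continuous f.isBddFun
  set F : S →ᵇ ℝ := hb.toBCF hf
  set c : ℝ := ∫ y, F y ∂μst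
  set g : S →ᵇ ℝ := F - c • 1
  have hgF : ∀ n x, (U ^ n) g x = kDual κ n f x - c := fun n x => by
    have : (U ^ n) g = (U ^ n) F - c • 1 := by
      rw [map_sub, map_smul, pow_apply_one hU₁]
    rw [this]
    have := hFeller.kDual_eq n F x
    change kDual κ n f x = _ at this
    simp [this, hUdef]
  have hglim : ∀ x, Tendsto (fun n => (U ^ n) g x) atTop (𝓝 0) := fun x => by
    have := (hlim F x).sub_const c
    rw [sub_self] at this
    refine this.congr fun n => ?_
    rw [hgF, ← hFeller.kDual_eq]
    rfl
  rw [Metric.tendsto_nhds]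
  intro e he
  set ε : ℝ := e / 6
  have hε : 0 < ε := by positivity
  obtain ⟨x₀, hx₀, r, hr, hsmall⟩ := exists_ball_eventually_abs_le
    (fun n => ((U ^ n) g).continuous) hglim isOpen_interior hsupp hε
  obtain ⟨φ, hφ₀, hφ₁, hφball, hφμ⟩ :=
    exists_bump_integral_pos μst hr (interior_subset hx₀ r hr)
  obtain ⟨h, hh, hhw⟩ := exists_eventuallyDominates_lt hU hU₁ hlim (g := g) hε.le hφ₀ hφ₁
    (hsmall.mono fun n hn x hx => hn x (hφball x hx)) hφμ w
    (show 0 < ε / (‖g‖ + 1) by positivity)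
  obtain ⟨M, hM⟩ := eventually_atTop.1 hh.bound
  have htail : ∀ x, h x < ε / (‖g‖ + 1) → ∀ n ≥ M, |(U ^ n) g x| ≤ 2 * ε := by
    intro x hx n hn
    rw [lt_div_iff₀ (by positivity)] at hx
    nlinarith [hM n hn x, hh.nonneg x]
  have hhead : ∀ᶠ x in 𝓝 w, ∀ n ∈ Finset.range M, |(U ^ n) g x - (U ^ n) g w| < 4 * ε := by
    rw [Filter.eventually_all_finset]
    intro n _
    have := Metric.tendsto_nhds.1 (((U ^ n) g).continuous.tendsto w) (4 * ε) (by positivity)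
    simpa only [Real.dist_eq] using this
  filter_upwards [hhead, h.continuous.continuousAt.eventually_lt_const hhw] with x hx hxh
  have hall : ∀ n, |kDual κ n f x - kDual κ n f w| ≤ 4 * ε := by
    intro n
    have hdiff : kDual κ n f x - kDual κ n f w = (U ^ n) g x - (U ^ n) g w := by
      rw [hgF, hgF]
      ring
    rw [hdiff]
    rcases lt_or_ge n M with hn | hn
    · exact (hx n (Finset.mem_range.2 hn)).le
    · linarith [abs_sub ((U ^ n) g x) ((U ^ n) g w), htail x hxh n hn, htail w hhw n hn]
  rw [Real.dist_eq, sub_zero, abs_of_nonneg (Real.iSup_nonneg fun n => abs_nonneg _)]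
  calc ⨆ n, |kDual κ n f x - kDual κ n f w| ≤ 4 * ε := ciSup_le hall
    _ < e := by simp only [ε]; linarith
end

section
/- Let S be a metric space, let f : S → ℝ be bounded and continuous, and let K ⊆ S be a compact set. Then for every ε > 0 there exists a bounded Lipschitz function L : S → ℝ such that sup_{x∈K} |f(x) − L(x)| ≤ ε and sup_{x∈S} |L(x)| ≤ sup_{x∈S} |f(x)|. -/
open Metric

/-- The infimal convolution of a function bounded below with `c * dist` is `c`-Lipschitz. -/
theorem lipschitzWith_iInf_add_mul_dist {S : Type*} [PseudoMetricSpace S] {f : S → ℝ}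
    {m : ℝ} (hm : ∀ x, m ≤ f x) (c : NNReal) :
    LipschitzWith c fun x => ⨅ y, f y + c * dist x y := by
  refine LipschitzWith.of_le_add_mul c fun x z => ?_
  have : Nonempty S := ⟨x⟩
  rw [← sub_le_iff_le_add]
  refine le_ciInf fun y => ?_
  have hbdd : BddBelow (Set.range fun y => f y + c * dist x y) :=
    ⟨m, by rintro _ ⟨y, rfl⟩; exact le_add_of_le_of_nonneg (hm y) (by positivity)⟩
  have hle := ciInf_le hbdd y
  have htri := mul_le_mul_of_nonneg_left (dist_triangle x z y) c.coe_nonneg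
  linarith

/-- A continuous function is uniformly continuous at the points of a compact set, with the
second point ranging over the whole space. -/
theorem IsCompact.exists_forall_dist_lt {S T : Type*} [PseudoMetricSpace S]
    [PseudoMetricSpace T] {f : S → T} (hf : Continuous f) {K : Set S} (hK : IsCompact K)
    {ε : ℝ} (hε : 0 < ε) :
    ∃ δ > 0, ∀ x ∈ K, ∀ y, dist x y < δ → dist (f x) (f y) < ε := by
  obtain ⟨δ, hδ, h⟩ := Metric.mem_uniformity_dist.1 <|
    hK.uniformContinuousAt_of_continuousAt f (fun _ _ => hf.continuousAt)
      (Metric.dist_mem_uniformity hε)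
  exact ⟨δ, hδ, fun x hx y hxy => h hxy hx⟩

/-- On a metric space, a bounded continuous function can be approximated uniformly on any
compact set, within any `ε > 0`, by a bounded Lipschitz function whose sup norm does not
exceed that of the original function. -/
theorem exists_lipschitz_approx_on_compact
    {S : Type*} [MetricSpace S] (f : S → ℝ)
    (hf_cont : Continuous f) (hf_bdd : ∃ C : ℝ, ∀ x, |f x| ≤ C)
    (K : Set S) (hK : IsCompact K) :
    ∀ ε > 0, ∃ L : S → ℝ, (∃ c : NNReal, LipschitzWith c L) ∧
      (∀ x ∈ K, |f x - L x| ≤ ε) ∧ (∀ x : S, |L x| ≤ ⨆ y : S, |f y|) := by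
  intro ε hε
  obtain ⟨C, hC⟩ := hf_bdd
  set M := ⨆ y : S, |f y|
  have hM : ∀ x, |f x| ≤ M := le_ciSup ⟨C, by rintro _ ⟨y, rfl⟩; exact hC y⟩
  have hM0 : 0 ≤ M := Real.iSup_nonneg fun _ => abs_nonneg _
  have hlow : ∀ x, -M ≤ f x := fun x => (abs_le.1 (hM x)).1
  obtain ⟨δ, hδ, hfδ⟩ := hK.exists_forall_dist_lt hf_cont hε
  let c : NNReal := ⟨2 * M / δ, by positivity⟩
  have hc : (c : ℝ) * δ = 2 * M := div_mul_cancel₀ _ hδ.ne'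
  have hterm : ∀ x y, -M ≤ f y + c * dist x y := fun x y =>
    le_add_of_le_of_nonneg (hlow y) (by positivity)
  have hle : ∀ x, (⨅ y, f y + c * dist x y) ≤ f x := fun x => by
    refine (ciInf_le ⟨-M, by rintro _ ⟨y, rfl⟩; exact hterm x y⟩ x).trans_eq ?_
    rw [dist_self, mul_zero, add_zero]
  refine ⟨fun x => ⨅ y, f y + c * dist x y, ⟨c, lipschitzWith_iInf_add_mul_dist hlow c⟩,
    fun x hx => ?_, fun x => ?_⟩
  · have : Nonempty S := ⟨x⟩
    have hge : f x - ε ≤ ⨅ y, f y + c * dist x y := le_ciInf fun y => by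
      rcases lt_or_ge (dist x y) δ with h | h
      · have hclose := (abs_lt.1 (hfδ x hx y h)).2
        have hnonneg : 0 ≤ (c : ℝ) * dist x y := by positivity
        linarith
      · have hfar := mul_le_mul_of_nonneg_left h c.coe_nonneg
        linarith [hlow y, (abs_le.1 (hM x)).2]
    rw [abs_of_nonneg (sub_nonneg.2 (hle x))]
    linarith
  · have : Nonempty S := ⟨x⟩
    exact abs_le.2 ⟨le_ciInf (hterm x), (hle x).trans (abs_le.1 (hM x)).2⟩
end

section
/- Consider the Markov operator P on S = ℝ given by the deterministic kernel κ(x,·) = δ_{x+1}, so that Uⁿf(x) = f(x+n). Then P has the e-property in L_FM(ℝ) at every point (for every 1-Lipschitz f : ℝ → [0,1] and every z, lim_{x→z} sup_{n∈ℕ} |f(x+n) − f(z+n)| = 0), but for every z ∈ ℝ there exists a bounded continuous function f : ℝ → ℝ such that lim sup_{x→z} sup_{n∈ℕ} |f(x+n) − f(z+n)| ≥ 1; in particular P does not have the e-property in C_b(ℝ) at any point. -/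
open Filter Topology

/-- A continuous function with values in `[0, 1]` that vanishes on `z + ℕ`, with bumps around
these points that become arbitrarily narrow. -/
noncomputable def narrowingBumps (z y : ℝ) : ℝ :=
  min 1 (|y - z| * |Real.sin ((y - z) * Real.pi)|)

lemma continuous_narrowingBumps (z : ℝ) : Continuous (narrowingBumps z) := by
  unfold narrowingBumps
  fun_prop

lemma abs_narrowingBumps_le_one (z y : ℝ) : |narrowingBumps z y| ≤ 1 := by
  rw [narrowingBumps, abs_of_nonneg (by positivity)]
  exact min_le_left _ _

lemma narrowingBumps_add_natCast_self (z : ℝ) (n : ℕ) : narrowingBumps z (z + n) = 0 := by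
  simp [narrowingBumps, Real.sin_nat_mul_pi]

lemma exists_narrowingBumps_add_natCast_eq_one {z x : ℝ}
    (hx : Real.sin ((x - z) * Real.pi) ≠ 0) : ∃ n : ℕ, narrowingBumps z (x + n) = 1 := by
  set s := |Real.sin ((x - z) * Real.pi)| with hs
  have hspos : 0 < s := abs_pos.mpr hx
  obtain ⟨n, hn⟩ := exists_nat_ge (s⁻¹ + |x - z|)
  refine ⟨n, min_eq_left ?_⟩
  have hsin : |Real.sin ((x + n - z) * Real.pi)| = s := by
    rw [show (x + n - z) * Real.pi = (x - z) * Real.pi + n * Real.pi by ring,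
      Real.sin_add_nat_mul_pi, abs_mul, abs_pow, abs_neg, abs_one, one_pow, one_mul]
  have hle : s⁻¹ ≤ |x + n - z| :=
    le_trans (by linarith [neg_abs_le (x - z)]) (le_abs_self _)
  rw [hsin]
  calc (1 : ℝ) = s⁻¹ * s := (inv_mul_cancel₀ hspos.ne').symm
    _ ≤ |x + n - z| * s := by gcongr

lemma iSup_abs_narrowingBumps_sub_eq_one {z x : ℝ}
    (hx : Real.sin ((x - z) * Real.pi) ≠ 0) :
    ⨆ n : ℕ, |narrowingBumps z (x + n) - narrowingBumps z (z + n)| = 1 := by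
  simp only [narrowingBumps_add_natCast_self, sub_zero]
  obtain ⟨n, hn⟩ := exists_narrowingBumps_add_natCast_eq_one hx
  refine le_antisymm (ciSup_le fun _ => abs_narrowingBumps_le_one _ _) ?_
  refine le_ciSup_of_le ⟨1, ?_⟩ n (by simp [hn])
  rintro _ ⟨m, rfl⟩
  exact abs_narrowingBumps_le_one _ _

lemma eventually_sin_sub_mul_pi_ne_zero (z : ℝ) :
    ∀ᶠ x in 𝓝[≠] z, Real.sin ((x - z) * Real.pi) ≠ 0 := by
  filter_upwards [self_mem_nhdsWithin, mem_nhdsWithin_of_mem_nhds (Metric.ball_mem_nhds z one_pos)]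
    with x hne hball hsin
  rw [Metric.mem_ball, Real.dist_eq, abs_lt] at hball
  have hpi := Real.pi_pos
  rw [Real.sin_eq_zero_iff_of_lt_of_lt (by nlinarith) (by nlinarith)] at hsin
  rcases mul_eq_zero.mp hsin with h | h
  · exact hne (sub_eq_zero.mp h)
  · exact hpi.ne' h

lemma one_le_limsup_iSup_narrowingBumps (z : ℝ) :
    1 ≤ limsup (fun x => ⨆ n : ℕ, |narrowingBumps z (x + n) - narrowingBumps z (z + n)|)
      (𝓝 z) := by
  refine le_limsup_of_frequently_le ?_ ?_
  · refine Frequently.filter_mono ?_ (nhdsWithin_le_nhds (s := {z}ᶜ))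
    exact ((eventually_sin_sub_mul_pi_ne_zero z).mono fun x hx =>
      (iSup_abs_narrowingBumps_sub_eq_one hx).ge).frequently
  · refine isBoundedUnder_of ⟨1, fun x => ciSup_le fun n => ?_⟩
    rw [narrowingBumps_add_natCast_self, sub_zero]
    exact abs_narrowingBumps_le_one _ _

lemma LipschitzWith.tendsto_iSup_abs_sub_add_natCast {f : ℝ → ℝ} {K : NNReal}
    (hf : LipschitzWith K f) (z : ℝ) :
    Tendsto (fun x => ⨆ n : ℕ, |f (x + n) - f (z + n)|) (𝓝 z) (𝓝 0) := by
  have hlim : Tendsto (fun x => K * |x - z|) (𝓝 z) (𝓝 0) := by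
    have hcont : Continuous fun x : ℝ => K * |x - z| := by fun_prop
    simpa using hcont.tendsto z
  refine squeeze_zero (fun x => Real.iSup_nonneg fun n => abs_nonneg _)
    (fun x => ciSup_le fun n => ?_) hlim
  simpa [Real.dist_eq] using hf.dist_le_mul (x + n) (z + n)

/-- For the Markov operator on `ℝ` generated by the deterministic kernel `κ(x,·) = δ_{x+1}`
(so that `Uⁿf(x) = f(x+n)`): it has the e-property in `L_FM(ℝ)` at every point, yet at every
point `z` there is a bounded continuous `f` witnessing the failure of the e-property in
`C_b(ℝ)`, with `limsup_{x→z} sup_{n} |Uⁿf(x) − Uⁿf(z)| ≥ 1`. -/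
theorem translation_ePropFM_but_not_ePropCb :
    (∀ f : ℝ → ℝ, LipschitzWith 1 f → (∀ x, f x ∈ Set.Icc (0 : ℝ) 1) → ∀ z : ℝ,
      Tendsto (fun x => ⨆ n : ℕ, |f (x + n) - f (z + n)|) (𝓝 z) (𝓝 0)) ∧
    (∀ z : ℝ, ∃ f : ℝ → ℝ, Continuous f ∧ (∃ C : ℝ, ∀ x, |f x| ≤ C) ∧
      (1 : ℝ) ≤ Filter.limsup (fun x => ⨆ n : ℕ, |f (x + n) - f (z + n)|) (𝓝 z) ∧
      ¬ Tendsto (fun x => ⨆ n : ℕ, |f (x + n) - f (z + n)|) (𝓝 z) (𝓝 0)) := by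
  refine ⟨fun f hf _ z => hf.tendsto_iSup_abs_sub_add_natCast z, fun z =>
    ⟨narrowingBumps z, continuous_narrowingBumps z, ⟨1, abs_narrowingBumps_le_one z⟩,
      one_le_limsup_iSup_narrowingBumps z, fun h => ?_⟩⟩
  have hle := one_le_limsup_iSup_narrowingBumps z
  rw [h.limsup_eq] at hle
  exact not_lt_of_ge hle one_pos
end

section
/- Let S be the circle ℝ/ℤ (equivalently the unit circle in ℝ², with points identified with their representatives x ∈ [0,1)), and let P be the Markov operator generated by the transition probability function π(y,·) = δ_{2y} for y ∈ [0,1/2) and π(y,·) = (1/2)δ_0 + (1/2)δ_{2y−1} for y ∈ [1/2,1). Then P is a Markov-Feller operator (its dual U maps bounded continuous functions on S to bounded continuous functions), δ_0 is an invariant measure of P, and P is asymptotically stable: for every Borel probability measure μ on S, Pⁿμ converges weakly to δ_0 as n → ∞. -/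
open MeasureTheory Filter Topology

/-- The representative in `[0,1)` of a point of the circle `ℝ/ℤ`. -/
noncomputable def circleRep (x : UnitAddCircle) : ℝ :=
  ((AddCircle.equivIco (1 : ℝ) 0) x : ℝ)

/-- The transition probability function `π(y,·) = δ_{2y}` for `y ∈ [0,1/2)` and
`π(y,·) = (1/2)δ₀ + (1/2)δ_{2y−1}` for `y ∈ [1/2,1)` (arithmetic modulo 1, so that
`δ_{2y−1} = δ_{2y}` on the circle). -/
noncomputable def circleKer (y : UnitAddCircle) : Measure UnitAddCircle :=
  if circleRep y < 1 / 2 then Measure.dirac (y + y)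
  else (1 / 2 : ENNReal) • Measure.dirac (0 : UnitAddCircle) +
    (1 / 2 : ENNReal) • Measure.dirac (y + y)

/-- The `n`-step evolution of a measure under the Markov operator generated by
`circleKer`. -/
noncomputable def circleP : ℕ → Measure UnitAddCircle → Measure UnitAddCircle
  | 0, μ => μ
  | n + 1, μ => (circleP n μ).bind circleKer

/-- The `n`-th iterate of the dual operator: `Uⁿf(x) = ∫ f d(Pⁿδₓ)`. -/
noncomputable def circleU (n : ℕ) (f : UnitAddCircle → ℝ) (x : UnitAddCircle) : ℝ :=
  ∫ y, f y ∂(circleP n (Measure.dirac x))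

/-- The `i`-th binary digit `e_{i+1}(x)` of a real number `x ∈ [0,1)` (the expansion with
infinitely many digits equal to `0`). -/
noncomputable def binDigit (x : ℝ) (i : ℕ) : ℕ := (⌊x * 2 ^ (i + 1)⌋).toNat % 2

open ProbabilityTheory

/-- The coefficient of `δ_{2y}` in `circleKer y`: `1` on `[0,1/2)`, `1/2` on `[1/2,1)`. -/
noncomputable def circleWeight (y : UnitAddCircle) : ℝ :=
  if circleRep y < 1 / 2 then 1 else 1 / 2

lemma coe_circleRep (x : UnitAddCircle) : ((circleRep x : ℝ) : UnitAddCircle) = x :=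
  AddCircle.coe_equivIco

lemma circleRep_mem (x : UnitAddCircle) : circleRep x ∈ Set.Ico (0 : ℝ) 1 := by
  simpa [circleRep] using ((AddCircle.equivIco (1 : ℝ) 0) x).2

lemma circleRep_coe {r : ℝ} (hr : r ∈ Set.Ico (0 : ℝ) 1) :
    circleRep (r : UnitAddCircle) = r :=
  AddCircle.equivIco_coe_of_mem (by simpa using hr)

lemma circleRep_zero : circleRep 0 = 0 := by
  simpa using circleRep_coe (r := 0) (by simp)

lemma circleRep_add_self {x : UnitAddCircle} (hx : circleRep x < 1 / 2) :
    circleRep (x + x) = 2 * circleRep x := by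
  have h := circleRep_mem x
  rw [← circleRep_coe (r := 2 * circleRep x) ⟨by linarith [h.1], by linarith⟩, two_mul,
    AddCircle.coe_add, coe_circleRep]

lemma add_self_eq_zero_of_circleRep {x : UnitAddCircle} (hx : circleRep x = 1 / 2) :
    x + x = 0 := by
  rw [← coe_circleRep x, ← AddCircle.coe_add, hx, add_halves]
  exact AddCircle.coe_period 1

lemma measurable_circleRep : Measurable circleRep :=
  measurable_subtype_coe.comp (AddCircle.measurableEquivIco (1 : ℝ) 0).measurable

lemma continuousAt_circleRep {x : UnitAddCircle} (hx : x ≠ 0) : ContinuousAt circleRep x :=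
  continuous_subtype_val.continuousAt.comp
    (AddCircle.continuousAt_equivIco (1 : ℝ) 0 (by simpa using hx))

lemma measurable_circleWeight : Measurable circleWeight :=
  Measurable.ite (measurableSet_lt measurable_circleRep measurable_const)
    measurable_const measurable_const

lemma circleWeight_nonneg (x : UnitAddCircle) : 0 ≤ circleWeight x := by
  unfold circleWeight; split_ifs <;> norm_num

lemma circleWeight_le_one (x : UnitAddCircle) : circleWeight x ≤ 1 := by
  unfold circleWeight; split_ifs <;> norm_num

lemma measurable_circleKer : Measurable circleKer := by
  have hd : Measurable fun y : UnitAddCircle => Measure.dirac (y + y) :=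
    Measure.measurable_dirac.comp (measurable_id.add measurable_id)
  refine Measurable.ite (measurableSet_lt measurable_circleRep measurable_const) hd ?_
  refine Measure.measurable_of_measurable_coe _ fun s hs => ?_
  simp only [Measure.add_apply, Measure.smul_apply, smul_eq_mul]
  exact ((Measure.measurable_coe hs).comp hd |>.const_mul _).const_add _

instance isProbabilityMeasure_circleKer (y : UnitAddCircle) :
    IsProbabilityMeasure (circleKer y) := by
  unfold circleKer
  split_ifs
  · infer_instance
  · exact ⟨by simp [ENNReal.inv_two_add_inv_two]⟩

instance isProbabilityMeasure_circleP (μ : Measure UnitAddCircle) [IsProbabilityMeasure μ]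
    (n : ℕ) : IsProbabilityMeasure (circleP n μ) := by
  induction n with
  | zero => simpa [circleP]
  | succ n ih =>
    refine ⟨?_⟩
    rw [circleP, Measure.bind_apply MeasurableSet.univ measurable_circleKer.aemeasurable]
    simp

lemma integral_circleKer (f : UnitAddCircle → ℝ) (x : UnitAddCircle) :
    ∫ y, f y ∂(circleKer x) = f 0 + circleWeight x * (f (x + x) - f 0) := by
  unfold circleKer circleWeight
  split_ifs
  · simp
  · rw [integral_add_measure, integral_smul_measure, integral_smul_measure, integral_dirac,
      integral_dirac]
    · simp; ring
    all_goals exact (integrable_dirac (by simp)).smul_measure (by simp)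

lemma integral_bind_circleKer (ν : Measure UnitAddCircle) [IsProbabilityMeasure ν]
    {g : UnitAddCircle → ℝ} (hg : Measurable g) {C : ℝ} (hC : ∀ x, |g x| ≤ C) :
    ∫ x, g x ∂(ν.bind circleKer) = ∫ x, ∫ y, g y ∂(circleKer x) ∂ν := by
  let κ : Kernel UnitAddCircle UnitAddCircle := ⟨circleKer, measurable_circleKer⟩
  have : IsMarkovKernel κ := ⟨isProbabilityMeasure_circleKer⟩
  exact Kernel.integral_comp (η := κ) (κ := Kernel.const Unit ν) (a := ())
    (Integrable.of_bound hg.aestronglyMeasurable C (ae_of_all _ hC))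

lemma continuous_integral_circleKer {f : UnitAddCircle → ℝ} (hf : Continuous f) :
    Continuous fun x => ∫ y, f y ∂(circleKer x) := by
  simp only [integral_circleKer]
  refine continuous_const.add (continuous_iff_continuousAt.2 fun x => ?_)
  have hg : Continuous fun y : UnitAddCircle => f (y + y) - f 0 := by fun_prop
  by_cases hx : x + x = 0
  · have hlim : Tendsto (fun y : UnitAddCircle => f (y + y) - f 0) (𝓝 x) (𝓝 0) := by
      simpa [hx] using hg.tendsto x
    rw [ContinuousAt, hx, sub_self, mul_zero]
    refine squeeze_zero_norm (fun y => ?_) (by simpa using hlim.norm)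
    rw [norm_mul]
    refine mul_le_of_le_one_left (norm_nonneg _) ?_
    rw [Real.norm_of_nonneg (circleWeight_nonneg y)]
    exact circleWeight_le_one y
  · have hrep := continuousAt_circleRep (x := x) (by rintro rfl; simp at hx)
    refine ContinuousAt.mul ?_ hg.continuousAt
    rcases lt_trichotomy (circleRep x) (1 / 2) with h | h | h
    · refine (continuousAt_const (y := (1 : ℝ))).congr ?_
      filter_upwards [hrep.eventually_lt_const h] with y hy
      simp only [circleWeight, if_pos hy]
    · exact absurd (add_self_eq_zero_of_circleRep h) hx
    · refine (continuousAt_const (y := (1 / 2 : ℝ))).congr ?_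
      filter_upwards [hrep.eventually_const_lt h] with y hy
      simp only [circleWeight, if_neg hy.not_gt]

lemma dirac_zero_bind_circleKer :
    (Measure.dirac (0 : UnitAddCircle)).bind circleKer = Measure.dirac 0 := by
  rw [Measure.dirac_bind measurable_circleKer]
  simp [circleKer, circleRep_zero]

/-- The probability that a chain started at `x` follows the doubling map for `n` steps without
being sent to `0`. -/
noncomputable def circleWeightProd (n : ℕ) (x : UnitAddCircle) : ℝ :=
  ∏ i ∈ Finset.range n, circleWeight (2 ^ i • x)

lemma circleWeightProd_succ (n : ℕ) (x : UnitAddCircle) :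
    circleWeightProd (n + 1) x = circleWeightProd n x * circleWeight (2 ^ n • x) :=
  Finset.prod_range_succ _ _

lemma circleWeightProd_nonneg (n : ℕ) (x : UnitAddCircle) : 0 ≤ circleWeightProd n x :=
  Finset.prod_nonneg fun _ _ => circleWeight_nonneg _

lemma circleWeightProd_le_one (n : ℕ) (x : UnitAddCircle) : circleWeightProd n x ≤ 1 :=
  Finset.prod_le_one (fun _ _ => circleWeight_nonneg _) fun _ _ => circleWeight_le_one _

lemma measurable_circleWeightProd (n : ℕ) : Measurable (circleWeightProd n) :=
  Finset.measurable_fun_prod _ fun i _ =>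
    measurable_circleWeight.comp (continuous_const_smul (2 ^ i)).measurable

lemma two_pow_succ_nsmul (n : ℕ) (x : UnitAddCircle) :
    2 ^ (n + 1) • x = 2 ^ n • x + 2 ^ n • x := by
  rw [pow_succ, mul_two, add_nsmul]

lemma integral_circleP (μ : Measure UnitAddCircle) [IsProbabilityMeasure μ] (n : ℕ)
    {g : UnitAddCircle → ℝ} (hg : Measurable g) (h0 : g 0 = 0) {C : ℝ}
    (hC : ∀ x, |g x| ≤ C) :
    ∫ x, g x ∂(circleP n μ) = ∫ x, circleWeightProd n x * g (2 ^ n • x) ∂μ := by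
  induction n generalizing g with
  | zero => simp [circleP, circleWeightProd]
  | succ n ih =>
    rw [circleP, integral_bind_circleKer _ hg hC]
    simp only [integral_circleKer, h0, zero_add, sub_zero]
    rw [ih (g := fun x => circleWeight x * g (x + x))]
    · simp only [circleWeightProd_succ, two_pow_succ_nsmul, mul_assoc]
    · exact measurable_circleWeight.mul (hg.comp (measurable_id.add measurable_id))
    · simp [h0]
    · intro x
      rw [abs_mul, abs_of_nonneg (circleWeight_nonneg x)]
      exact (mul_le_of_le_one_left (abs_nonneg _) (circleWeight_le_one x)).trans (hC _)

lemma eq_zero_of_forall_circleRep_lt {x : UnitAddCircle}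
    (h : ∀ i : ℕ, circleRep (2 ^ i • x) < 1 / 2) : x = 0 := by
  have hpow (i : ℕ) : circleRep (2 ^ i • x) = 2 ^ i * circleRep x := by
    induction i with
    | zero => simp
    | succ i ih => rw [two_pow_succ_nsmul, circleRep_add_self (h i), ih]; ring
  have hrep : circleRep x = 0 := by
    by_contra hne
    have hpos : 0 < circleRep x := lt_of_le_of_ne (circleRep_mem x).1 (Ne.symm hne)
    obtain ⟨i, hi⟩ := pow_unbounded_of_one_lt (1 / circleRep x) (one_lt_two (α := ℝ))
    rw [div_lt_iff₀ hpos] at hi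
    linarith [h i, hpow i]
  rw [← coe_circleRep x, hrep, AddCircle.coe_zero]

lemma tendsto_circleWeightProd_mul {g : UnitAddCircle → ℝ} (h0 : g 0 = 0) {C : ℝ}
    (hC : ∀ x, |g x| ≤ C) (x : UnitAddCircle) :
    Tendsto (fun n => circleWeightProd n x * g (2 ^ n • x)) atTop (𝓝 0) := by
  by_cases h : ∀ᶠ i : ℕ in atTop, circleRep (2 ^ i • x) < 1 / 2
  · obtain ⟨N, hN⟩ := eventually_atTop.1 h
    have hzero : 2 ^ N • x = 0 := eq_zero_of_forall_circleRep_lt fun i => by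
      rw [← mul_nsmul, ← pow_add]
      exact hN _ (Nat.le_add_right N i)
    refine tendsto_const_nhds.congr' ?_
    filter_upwards [eventually_ge_atTop N] with n hn
    obtain ⟨k, rfl⟩ := Nat.exists_eq_add_of_le hn
    rw [pow_add, mul_nsmul, hzero, nsmul_zero, h0, mul_zero]
  · have hanti : Antitone fun n => circleWeightProd n x := antitone_nat_of_succ_le fun n => by
      rw [circleWeightProd_succ]
      exact mul_le_of_le_one_right (circleWeightProd_nonneg n x) (circleWeight_le_one _)
    have hlim := tendsto_atTop_ciInf hanti
      ⟨0, by rintro _ ⟨n, rfl⟩; exact circleWeightProd_nonneg n x⟩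
    have hfreq : ∃ᶠ n in atTop, circleWeightProd (n + 1) x = circleWeightProd n x * (1 / 2) :=
      (not_eventually.1 h).mono fun n hn => by
        rw [circleWeightProd_succ, circleWeight, if_neg hn]
    have hL := tendsto_nhds_unique_of_frequently_eq ((tendsto_add_atTop_iff_nat 1).2 hlim)
      (hlim.mul_const (1 / 2)) hfreq
    rw [show ⨅ n, circleWeightProd n x = 0 by linarith] at hlim
    exact hlim.zero_mul_isBoundedUnder_le (isBoundedUnder_of ⟨C, fun n => hC _⟩)

lemma tendsto_integral_circleP (μ : Measure UnitAddCircle) [IsProbabilityMeasure μ]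
    {f : UnitAddCircle → ℝ} (hf : Measurable f) {C : ℝ} (hC : ∀ x, |f x| ≤ C) :
    Tendsto (fun n => ∫ x, f x ∂(circleP n μ)) atTop (𝓝 (f 0)) := by
  have hg : Measurable fun x => f x - f 0 := hf.sub_const _
  have h0 : f 0 - f 0 = 0 := sub_self _
  have hgC (x : UnitAddCircle) : |f x - f 0| ≤ C + C :=
    (abs_sub _ _).trans (add_le_add (hC x) (hC 0))
  have hlim : Tendsto (fun n => ∫ x, circleWeightProd n x * (f (2 ^ n • x) - f 0) ∂μ) atTop
      (𝓝 (∫ _, (0 : ℝ) ∂μ)) := by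
    refine tendsto_integral_of_dominated_convergence (fun _ => C + C) (fun n => ?_)
      (integrable_const _) (fun n => ae_of_all _ fun x => ?_)
      (ae_of_all _ fun x =>
        tendsto_circleWeightProd_mul (g := fun x => f x - f 0) h0 hgC x)
    · exact ((measurable_circleWeightProd n).mul
        (hg.comp (continuous_const_smul (2 ^ n)).measurable)).aestronglyMeasurable
    · rw [norm_mul, Real.norm_of_nonneg (circleWeightProd_nonneg n x)]
      exact (mul_le_of_le_one_left (norm_nonneg _) (circleWeightProd_le_one n x)).trans (hgC _)
  have heq (n : ℕ) : ∫ x, f x ∂(circleP n μ) =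
      f 0 + ∫ x, circleWeightProd n x * (f (2 ^ n • x) - f 0) ∂μ := by
    rw [← integral_circleP μ n hg h0 hgC, integral_sub _ (integrable_const _)]
    · simp
    · exact Integrable.of_bound hf.aestronglyMeasurable C (ae_of_all _ hC)
  simpa [heq] using hlim.const_add (f 0)

/-- The Markov operator on the circle `ℝ/ℤ` generated by `π(y,·) = δ_{2y}` for
`y ∈ [0,1/2)`, `π(y,·) = (1/2)δ₀ + (1/2)δ_{2y−1}` for `y ∈ [1/2,1)`, is Feller, has `δ₀` as
an invariant measure, and is asymptotically stable: `Pⁿμ → δ₀` weakly for every Borel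
probability measure `μ`. -/
theorem circle_markov_feller_asympStable :
    (∀ f : UnitAddCircle → ℝ, Continuous f → (∃ C : ℝ, ∀ x, |f x| ≤ C) →
      Continuous (fun x => ∫ y, f y ∂(circleKer x))) ∧
    (Measure.dirac (0 : UnitAddCircle)).bind circleKer = Measure.dirac (0 : UnitAddCircle) ∧
    (∀ μ : Measure UnitAddCircle, IsProbabilityMeasure μ →
      ∀ f : UnitAddCircle → ℝ, Continuous f → (∃ C : ℝ, ∀ x, |f x| ≤ C) →
        Tendsto (fun n => ∫ x, f x ∂(circleP n μ)) atTop
          (𝓝 (∫ x, f x ∂(Measure.dirac (0 : UnitAddCircle))))) := by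
  refine ⟨fun f hf _ => continuous_integral_circleKer hf, dirac_zero_bind_circleKer, ?_⟩
  rintro μ hμ f hf ⟨C, hC⟩
  rw [integral_dirac]
  exact tendsto_integral_circleP μ hf.measurable hC
end
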